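/- Let m ≥ 1 and let A_1, A_2, A_3, A_4 be four distinct points of ℝ² no three of which are collinear. Then the Hermite problem with scheme {m, m, m, m−1; 2m−1} is (2m−1)-correct; equivalently, the only p ∈ Π_{2m−1} with D^{ij}p(A_k) = 0 for all i+j ≤ m−1 (k = 1,2,3) and all i+j ≤ m−2 (k = 4) is p = 0. -/

import Mathlib

open MvPolynomial

/-- `Dij i j p` is the partial derivative `D^{ij} p = ∂^{i+j} p / ∂x^i ∂y^j`. -/
noncomputable def Dij (i j : ℕ) (p : MvPolynomial (Fin 2) ℝ) : MvPolynomial (Fin 2) ℝ :=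
  (fun q => pderiv (0 : Fin 2) q)^[i] ((fun q => pderiv (1 : Fin 2) q)^[j] p)

/-- The Hermite interpolation problem with multiplicities `nk` on the nodes `A` is
`n`-correct: every data admits a unique interpolant in `Π_n`. -/
def HermiteCorrect (n s : ℕ) (nk : Fin s → ℕ) (A : Fin s → Fin 2 → ℝ) : Prop :=
  ∀ c : Fin s → ℕ → ℕ → ℝ,
    ∃! p : MvPolynomial (Fin 2) ℝ, p.totalDegree ≤ n ∧
      ∀ (k : Fin s) (i j : ℕ), i + j + 1 ≤ nk k → eval (A k) (Dij i j p) = c k i j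

/-! If `p` has degree less than the sum of its multiplicities at two nodes, then its restriction
to the line through them vanishes, so the equation of the line divides `p`. The quotient has
degree one less; its multiplicity drops by at most one at the nodes on the line and not at all at
the others. Dividing out the lines `A₀A₁` and `A₀A₂` turns the multiplicities `(m, m, m, m - 1)`
in degree `2m - 1` into `(m - 2, m - 1, m - 1, m - 1)` in degree `2m - 3`. This is the same
configuration for `m - 1`, with `A₀` as the node of lower multiplicity, and uniqueness follows by
induction on `m`. Existence follows since there are as many conditions as coefficients. With
Taylor coefficients in place of derivatives, the argument works over every field.
-/

section Taylor

variable {σ R : Type*} [CommSemiring R]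

/-- The Taylor expansion of `p` at `P`, i.e. the polynomial `p (P + X)`, the multivariate
counterpart of `Polynomial.taylor`. -/
noncomputable def mvTaylor (P : σ → R) : MvPolynomial σ R →ₐ[R] MvPolynomial σ R :=
  aeval fun i ↦ X i + C (P i)

theorem mvTaylor_X (P : σ → R) (i : σ) : mvTaylor P (X i) = X i + C (P i) :=
  aeval_X _ i

theorem coeff_zero_mvTaylor (P : σ → R) (p : MvPolynomial σ R) :
    coeff 0 (mvTaylor P p) = eval P p := by
  rw [← constantCoeff_eq]
  induction p using MvPolynomial.induction_on with
  | C a => simp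
  | add p q hp hq => simp only [map_add, hp, hq]
  | mul_X p i hp => simp [hp, mvTaylor_X]

theorem pderiv_mvTaylor (P : σ → R) (i : σ) (p : MvPolynomial σ R) :
    pderiv i (mvTaylor P p) = mvTaylor P (pderiv i p) := by
  classical
  induction p using MvPolynomial.induction_on with
  | C a => simp
  | add p q hp hq => simp only [map_add, hp, hq]
  | mul_X p j hp =>
    have h : mvTaylor P (pderiv i (X j)) = pderiv i (mvTaylor P (X j)) := by
      rcases eq_or_ne j i with rfl | hji <;> simp [mvTaylor_X, *]
    simp only [map_mul, map_add, Derivation.leibniz, smul_eq_mul, hp, h]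

theorem coeff_single_one_mvTaylor (P : σ → R) (i : σ) (p : MvPolynomial σ R) :
    coeff (Finsupp.single i 1) (mvTaylor P p) = eval P (pderiv i p) := by
  rw [← coeff_zero_mvTaylor, ← pderiv_mvTaylor, coeff_pderiv]
  simp

theorem coeff_iterate_pderiv (i : σ) (k : ℕ) (p : MvPolynomial σ R) {d : σ →₀ ℕ} (hd : d i = 0) :
    coeff d ((fun q ↦ pderiv i q)^[k] p) = k.factorial * coeff (d + Finsupp.single i k) p := by
  induction k generalizing p with
  | zero => simp
  | succ k ih =>
    rw [Function.iterate_succ_apply, ih, coeff_pderiv, add_assoc, ← Finsupp.single_add,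
      Nat.factorial_succ]
    simp only [Finsupp.add_apply, Finsupp.single_eq_same, hd]
    push_cast
    ring

/-- The order of vanishing (multiplicity) of `p` at the point `P`; it is `⊤` for `p = 0`. -/
noncomputable def vanishingOrder (P : σ → R) (p : MvPolynomial σ R) : ℕ∞ :=
  (mvTaylor P p : MvPowerSeries σ R).order

theorem natCast_le_vanishingOrder_iff {P : σ → R} {p : MvPolynomial σ R} {n : ℕ} :
    n ≤ vanishingOrder P p ↔ ∀ d : σ →₀ ℕ, d.degree < n → coeff d (mvTaylor P p) = 0 := by
  simp only [← MvPolynomial.coeff_coe]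
  exact ⟨fun h d hd ↦ MvPowerSeries.coeff_of_lt_order ((Nat.cast_lt.2 hd).trans_le h),
    MvPowerSeries.nat_le_order⟩

theorem vanishingOrder_mul [NoZeroDivisors R] (P : σ → R) (p q : MvPolynomial σ R) :
    vanishingOrder P (p * q) = vanishingOrder P p + vanishingOrder P q := by
  simp only [vanishingOrder, map_mul, MvPolynomial.coe_mul, MvPowerSeries.order_mul]

theorem vanishingOrder_eq_zero {P : σ → R} {p : MvPolynomial σ R} (h : eval P p ≠ 0) :
    vanishingOrder P p = 0 := by
  rw [← coeff_zero_mvTaylor, ← MvPolynomial.coeff_coe] at h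
  simpa [vanishingOrder] using MvPowerSeries.order_le h

theorem vanishingOrder_le_one {P : σ → R} {p : MvPolynomial σ R} {i : σ}
    (h : eval P (pderiv i p) ≠ 0) : vanishingOrder P p ≤ 1 := by
  rw [← coeff_single_one_mvTaylor, ← MvPolynomial.coeff_coe] at h
  simpa [vanishingOrder] using MvPowerSeries.order_le h

theorem pow_dvd_aeval {S : Type*} [CommSemiring S] [Algebra R S] {p : MvPolynomial σ R} {n : ℕ}
    (hp : ∀ d : σ →₀ ℕ, d.degree < n → coeff d p = 0) {a : S} {f : σ → S} (hf : ∀ i, a ∣ f i) :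
    a ^ n ∣ aeval f p := by
  rw [aeval_def, eval₂_eq]
  refine Finset.dvd_sum fun d hd ↦ Dvd.dvd.mul_left ?_ _
  have hn : n ≤ d.degree := not_lt.1 fun h ↦ mem_support_iff.1 hd (hp d h)
  calc a ^ n ∣ a ^ d.degree := pow_dvd_pow a hn
    _ = ∏ i ∈ d.support, a ^ d i := by rw [Finsupp.degree_apply, Finset.prod_pow_eq_pow_sum]
    _ ∣ ∏ i ∈ d.support, f i ^ d i :=
      Finset.prod_dvd_prod_of_dvd _ _ fun i _ ↦ pow_dvd_pow_of_dvd (hf i) _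

end Taylor

section RestrictLine

variable {σ R : Type*} [CommRing R]

/-- The univariate polynomial `p (P + t (Q - P))` in `t`, i.e. the restriction of `p` to the line
through `P` and `Q`. -/
noncomputable def restrictLine (P Q : σ → R) : MvPolynomial σ R →ₐ[R] Polynomial R :=
  aeval fun i ↦ Polynomial.C (P i) + Polynomial.X * Polynomial.C (Q i - P i)

theorem natDegree_restrictLine_le (P Q : σ → R) (p : MvPolynomial σ R) :
    (restrictLine P Q p).natDegree ≤ p.totalDegree := by
  have h := aeval_natDegree_le (n := 1) p le_rfl
    (fun i ↦ Polynomial.C (P i) + Polynomial.X * Polynomial.C (Q i - P i))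
    fun i ↦ by compute_degree
  rwa [mul_one] at h

theorem pow_dvd_restrictLine {P Q : σ → R} {t : R} {p : MvPolynomial σ R} {n : ℕ}
    (h : n ≤ vanishingOrder (AffineMap.lineMap P Q t) p) :
    (Polynomial.X - Polynomial.C t) ^ n ∣ restrictLine P Q p := by
  have hcomp : restrictLine P Q =
      (aeval fun i ↦ (Polynomial.X - Polynomial.C t) * Polynomial.C (Q i - P i)).comp
        (mvTaylor (AffineMap.lineMap P Q t)) := by
    refine algHom_ext fun i ↦ ?_
    simp only [restrictLine, AlgHom.comp_apply, mvTaylor_X, map_add, aeval_X, algHom_C,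
      Polynomial.algebraMap_eq, AffineMap.lineMap_apply_module', Pi.add_apply, Pi.smul_apply,
      Pi.sub_apply, smul_eq_mul, map_mul, map_sub]
    ring
  rw [hcomp, AlgHom.comp_apply]
  exact pow_dvd_aeval (natCast_le_vanishingOrder_iff.1 h) fun i ↦ dvd_mul_right _ _

theorem restrictLine_eq_zero [IsDomain R] {P Q : σ → R} {p : MvPolynomial σ R} {n k : ℕ}
    (hP : n ≤ vanishingOrder P p) (hQ : k ≤ vanishingOrder Q p) (hdeg : p.totalDegree < n + k) :
    restrictLine P Q p = 0 := by
  rw [← AffineMap.lineMap_apply_zero (k := R) P Q] at hP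
  rw [← AffineMap.lineMap_apply_one (k := R) P Q] at hQ
  have hcop : IsCoprime ((Polynomial.X - Polynomial.C (0 : R)) ^ n)
      ((Polynomial.X - Polynomial.C 1) ^ k) :=
    (Polynomial.isCoprime_X_sub_C_of_isUnit_sub (by simp)).pow
  refine Polynomial.eq_zero_of_dvd_of_natDegree_lt
    (hcop.mul_dvd (pow_dvd_restrictLine hP) (pow_dvd_restrictLine hQ)) ?_
  rw [((Polynomial.monic_X_sub_C 0).pow n).natDegree_mul ((Polynomial.monic_X_sub_C 1).pow k)]
  simpa only [Polynomial.natDegree_pow, Polynomial.natDegree_X_sub_C, mul_one]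
    using (natDegree_restrictLine_le P Q p).trans_lt hdeg

end RestrictLine

theorem dvd_aeval_sub_aeval {σ R S : Type*} [CommRing R] [CommRing S] [Algebra R S] {a : S}
    {f g : σ → S} (h : ∀ i, a ∣ f i - g i) (p : MvPolynomial σ R) :
    a ∣ aeval f p - aeval g p := by
  induction p using MvPolynomial.induction_on with
  | C r => simp
  | add p q hp hq => simpa only [map_add, add_sub_add_comm] using dvd_add hp hq
  | mul_X p i hp => simpa only [map_mul, aeval_X] using dvd_mul_sub_mul hp (h i)

theorem exists_dotProduct_eq_one {ι K : Type*} [Fintype ι] [DivisionRing K] {v : ι → K}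
    (hv : v ≠ 0) : ∃ w : ι → K, w ⬝ᵥ v = 1 := by
  classical
  obtain ⟨i, hi⟩ := Function.ne_iff.1 hv
  exact ⟨Pi.single i (v i)⁻¹, by rw [single_dotProduct, inv_mul_cancel₀ hi]⟩

section LineThrough

section CommRing

variable {R : Type*} [CommRing R] {P Q : Fin 2 → R}

/-- The affine form whose zero set is the line through `P` and `Q`; it is `0` if `P = Q`. -/
noncomputable def lineThrough (P Q : Fin 2 → R) : MvPolynomial (Fin 2) R :=
  C (Q 0 - P 0) * (X 1 - C (P 1)) - C (Q 1 - P 1) * (X 0 - C (P 0))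

theorem eval_lineThrough (P Q S : Fin 2 → R) :
    eval S (lineThrough P Q) = (Q 0 - P 0) * (S 1 - P 1) - (Q 1 - P 1) * (S 0 - P 0) := by
  simp [lineThrough]

theorem exists_pderiv_lineThrough_eq_C (hPQ : P ≠ Q) :
    ∃ i, ∃ c ≠ 0, pderiv i (lineThrough P Q) = C c := by
  obtain ⟨i, hi⟩ := Function.ne_iff.1 hPQ
  fin_cases i
  · exact ⟨1, Q 0 - P 0, sub_ne_zero.2 (Ne.symm hi), by simp [lineThrough]⟩
  · exact ⟨0, P 1 - Q 1, sub_ne_zero.2 hi, by simp [lineThrough]⟩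

theorem totalDegree_lineThrough (hPQ : P ≠ Q) : (lineThrough P Q).totalDegree = 1 := by
  have hle (c a : R) (i : Fin 2) : (C c * (X i - C a)).totalDegree ≤ 1 := by
    have : Nontrivial R := (Function.ne_iff.1 hPQ).elim fun j hj ↦ ⟨_, _, hj⟩
    calc (C c * (X i - C a)).totalDegree ≤ (X i - C a).totalDegree := by
          simpa using totalDegree_mul (C c) (X i - C a)
      _ ≤ (X i : MvPolynomial (Fin 2) R).totalDegree := totalDegree_sub_C_le _ _
      _ = 1 := totalDegree_X i
  refine le_antisymm ((totalDegree_sub _ _).trans (max_le (hle _ _ _) (hle _ _ _))) ?_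
  obtain ⟨i, c, hc, hderiv⟩ := exists_pderiv_lineThrough_eq_C hPQ
  refine Nat.one_le_iff_ne_zero.2 fun h0 ↦ hc ?_
  rwa [totalDegree_eq_zero_iff_eq_C.1 h0, pderiv_C, eq_comm, C_eq_zero] at hderiv

theorem vanishingOrder_lineThrough_le_one (hPQ : P ≠ Q) (S : Fin 2 → R) :
    vanishingOrder S (lineThrough P Q) ≤ 1 := by
  obtain ⟨i, c, hc, hderiv⟩ := exists_pderiv_lineThrough_eq_C hPQ
  exact vanishingOrder_le_one (i := i) (by rwa [hderiv, eval_C])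

end CommRing

variable {K : Type*} [Field K] {P Q S : Fin 2 → K} {p : MvPolynomial (Fin 2) K}

theorem collinear_iff_eval_lineThrough_eq_zero :
    Collinear K {P, Q, S} ↔ eval S (lineThrough P Q) = 0 := by
  rw [eval_lineThrough]
  constructor
  · intro h
    obtain ⟨v, hv⟩ := (collinear_iff_of_mem (Set.mem_insert P _)).1 h
    obtain ⟨a, rfl⟩ := hv Q (by simp)
    obtain ⟨b, rfl⟩ := hv S (by simp)
    simp only [Pi.vadd_apply', Pi.smul_apply, smul_eq_mul, vadd_eq_add]
    ring
  · intro h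
    rcases eq_or_ne P Q with rfl | hPQ
    · simpa using collinear_pair K P S
    obtain ⟨w, hw⟩ := exists_dotProduct_eq_one (sub_ne_zero.2 hPQ.symm)
    simp only [dotProduct, Fin.sum_univ_two, Pi.sub_apply] at hw
    rw [collinear_iff_of_mem (Set.mem_insert P _)]
    refine ⟨Q - P, ?_⟩
    simp only [Set.mem_insert_iff, Set.mem_singleton_iff, forall_eq_or_imp, forall_eq]
    refine ⟨⟨0, by simp⟩, ⟨1, by simp⟩, w 0 * (S 0 - P 0) + w 1 * (S 1 - P 1), ?_⟩
    ext i
    fin_cases i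
    · simp only [Fin.zero_eta, Pi.vadd_apply', Pi.smul_apply, Pi.sub_apply, smul_eq_mul,
        vadd_eq_add]
      linear_combination (P 0 - S 0) * hw - w 1 * h
    · simp only [Fin.mk_one, Pi.vadd_apply', Pi.smul_apply, Pi.sub_apply, smul_eq_mul, vadd_eq_add]
      linear_combination (P 1 - S 1) * hw + w 0 * h

theorem not_collinear_of_no_common_line (hPQ : P ≠ Q)
    (h : ∀ l : MvPolynomial (Fin 2) K, l ≠ 0 → l.totalDegree = 1 →
      ¬(eval P l = 0 ∧ eval Q l = 0 ∧ eval S l = 0)) :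
    ¬Collinear K {P, Q, S} := by
  have hdeg := totalDegree_lineThrough hPQ
  intro hcol
  refine h (lineThrough P Q) ?_ hdeg ⟨?_, ?_, collinear_iff_eval_lineThrough_eq_zero.1 hcol⟩
  · intro h0
    simp [h0] at hdeg
  · rw [eval_lineThrough]; ring
  · rw [eval_lineThrough]; ring

theorem lineThrough_dvd_of_restrictLine_eq_zero (hPQ : P ≠ Q) (h : restrictLine P Q p = 0) :
    lineThrough P Q ∣ p := by
  obtain ⟨w, hw⟩ := exists_dotProduct_eq_one (sub_ne_zero.2 hPQ.symm)
  simp only [dotProduct, Fin.sum_univ_two, Pi.sub_apply] at hw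
  have hCw := congrArg (C (σ := Fin 2)) hw
  simp only [map_add, map_mul, map_sub, map_one] at hCw
  -- `τ` extends the parameter of the line to the plane: `P + τ (Q - P)` is the identity modulo the
  -- equation of the line.
  let τ : MvPolynomial (Fin 2) K := C (w 0) * (X 0 - C (P 0)) + C (w 1) * (X 1 - C (P 1))
  have hτ : ∀ i, lineThrough P Q ∣ X i - (C (P i) + τ * C (Q i - P i)) := by
    intro i
    fin_cases i
    · refine ⟨-C (w 1), ?_⟩
      simp only [lineThrough, τ, Fin.zero_eta, map_sub]
      linear_combination (C (P 0) - X 0) * hCw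
    · refine ⟨C (w 0), ?_⟩
      simp only [lineThrough, τ, Fin.mk_one, map_sub]
      linear_combination (C (P 1) - X 1) * hCw
  -- The restriction vanishes identically, so it stays zero when `τ` is substituted for `t`.
  have hzero : aeval (fun i ↦ C (P i) + τ * C (Q i - P i)) p = 0 := by
    have hcomp : (aeval fun i ↦ C (P i) + τ * C (Q i - P i)) =
        (Polynomial.aeval τ).comp (restrictLine P Q) := by
      refine algHom_ext fun i ↦ ?_
      simp [restrictLine, algebraMap_eq]
    rw [hcomp, AlgHom.comp_apply, h, map_zero]
  have hdvd := dvd_aeval_sub_aeval hτ p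
  rwa [hzero, sub_zero, aeval_X_left_apply] at hdvd

theorem lineThrough_dvd (hPQ : P ≠ Q) {n k : ℕ} (hP : n ≤ vanishingOrder P p)
    (hQ : k ≤ vanishingOrder Q p) (hdeg : p.totalDegree < n + k) : lineThrough P Q ∣ p :=
  lineThrough_dvd_of_restrictLine_eq_zero hPQ (restrictLine_eq_zero hP hQ hdeg)

end LineThrough
section FourPoints

variable {K : Type*} [Field K]

theorem exists_eq_lineThrough_mul {P Q : Fin 2 → K} (hPQ : P ≠ Q) {p : MvPolynomial (Fin 2) K}
    (hp : p ≠ 0) {n k : ℕ} (hP : n ≤ vanishingOrder P p) (hQ : k ≤ vanishingOrder Q p)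
    (hdeg : p.totalDegree < n + k) :
    ∃ q ≠ 0, p = lineThrough P Q * q ∧ q.totalDegree + 1 = p.totalDegree ∧
      (∀ S, vanishingOrder S p ≤ vanishingOrder S q + 1) ∧
      ∀ S, ¬Collinear K {P, Q, S} → vanishingOrder S p ≤ vanishingOrder S q := by
  obtain ⟨q, rfl⟩ := lineThrough_dvd hPQ hP hQ hdeg
  obtain ⟨hl, hq⟩ := mul_ne_zero_iff.1 hp
  refine ⟨q, hq, rfl, ?_, fun S ↦ ?_, fun S hS ↦ ?_⟩
  · rw [totalDegree_mul_of_isDomain hl hq, totalDegree_lineThrough hPQ, add_comm]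
  · rw [vanishingOrder_mul, add_comm]
    gcongr
    exact vanishingOrder_lineThrough_le_one hPQ S
  · rw [collinear_iff_eval_lineThrough_eq_zero] at hS
    rw [vanishingOrder_mul, vanishingOrder_eq_zero hS, zero_add]

theorem eq_zero_of_le_vanishingOrder {A : Fin 4 → Fin 2 → K}
    (hA : ∀ i j k, i ≠ j → i ≠ k → j ≠ k → ¬Collinear K {A i, A j, A k}) {m : ℕ}
    {p : MvPolynomial (Fin 2) K} (hdeg : p.totalDegree < 2 * m) (h₀ : m ≤ vanishingOrder (A 0) p)
    (h₁ : m ≤ vanishingOrder (A 1) p) (h₂ : m ≤ vanishingOrder (A 2) p)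
    (h₃ : m ≤ vanishingOrder (A 3) p + 1) : p = 0 := by
  induction m generalizing A p with
  | zero => simp at hdeg
  | succ m ih =>
    by_contra hp
    have h01 : A 0 ≠ A 1 := ne₁₂_of_not_collinear (hA 0 1 2 (by decide) (by decide) (by decide))
    have h02 : A 0 ≠ A 2 := ne₁₂_of_not_collinear (hA 0 2 1 (by decide) (by decide) (by decide))
    obtain ⟨q, hq, -, hqdeg, hq_on, hq_off⟩ := exists_eq_lineThrough_mul h01 hp h₀ h₁ (by omega)
    replace h₀ := h₀.trans (hq_on _)
    replace h₁ := h₁.trans (hq_on _)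
    replace h₂ := h₂.trans (hq_off _ (hA 0 1 2 (by decide) (by decide) (by decide)))
    replace h₃ := h₃.trans <|
      add_le_add_left (hq_off _ (hA 0 1 3 (by decide) (by decide) (by decide))) 1
    simp only [Nat.cast_add, Nat.cast_one, ENat.add_le_add_iff_right ENat.one_ne_top] at h₀ h₁ h₃
    obtain ⟨r, hr, -, hrdeg, hr_on, hr_off⟩ :=
      exists_eq_lineThrough_mul (k := m + 1) h02 hq h₀ h₂ (by omega)
    replace h₀ := h₀.trans (hr_on _)
    replace h₁ := h₁.trans (hr_off _ (hA 0 2 1 (by decide) (by decide) (by decide)))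
    replace h₂ := h₂.trans (hr_on _)
    replace h₃ := h₃.trans (hr_off _ (hA 0 2 3 (by decide) (by decide) (by decide)))
    simp only [Nat.cast_add, Nat.cast_one, ENat.add_le_add_iff_right ENat.one_ne_top] at h₂
    -- Now `A 0` is the node of lower multiplicity: rotate it into the last position.
    have hA_rotate (i j k : Fin 4) (hij : i ≠ j) (hik : i ≠ k) (hjk : j ≠ k) :
        ¬Collinear K {A (i + 1), A (j + 1), A (k + 1)} :=
      hA _ _ _ ((add_left_injective 1).ne hij) ((add_left_injective 1).ne hik)
        ((add_left_injective 1).ne hjk)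
    exact hr (ih (A := fun i ↦ A (i + 1)) hA_rotate (by omega) h₁ h₂ h₃ h₀)

end FourPoints

section TaylorInterpolation

variable {ι σ K : Type*} [Field K]

/-- The Taylor interpolation problem with multiplicities `μ` on the nodes `A` is `n`-correct: the
Taylor coefficients of order less than `μ k` at the nodes `A k` can be prescribed by exactly one
polynomial of total degree at most `n`. This is the Hermite problem for divided derivatives, and it
makes sense in every characteristic. -/
def TaylorCorrect (n : ℕ) (μ : ι → ℕ) (A : ι → σ → K) : Prop :=
  ∀ c : ι → (σ →₀ ℕ) → K, ∃! p : MvPolynomial σ K, p.totalDegree ≤ n ∧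
    ∀ k, ∀ d : σ →₀ ℕ, d.degree < μ k → coeff d (mvTaylor (A k) p) = c k d

theorem finrank_restrictTotalDegree (n : ℕ) :
    Module.finrank K (restrictTotalDegree σ K n) = Nat.card {d : σ →₀ ℕ // d.degree < n + 1} := by
  simp only [Order.lt_add_one_iff]
  exact Module.finrank_eq_nat_card_basis (basisRestrictSupport K _)

/-- The map taking `p` to its Taylor coefficients of order less than `μ k` at the nodes `A k`. -/
noncomputable def taylorData (μ : ι → ℕ) (A : ι → σ → K) :
    MvPolynomial σ K →ₗ[K] (Σ k, {d : σ →₀ ℕ // d.degree < μ k}) → K :=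
  LinearMap.pi fun x ↦ lcoeff K x.2.1 ∘ₗ (mvTaylor (A x.1)).toLinearMap

theorem taylorData_eq_iff {μ : ι → ℕ} {A : ι → σ → K} {p : MvPolynomial σ K}
    {c : ι → (σ →₀ ℕ) → K} :
    taylorData μ A p = (fun x ↦ c x.1 x.2) ↔
      ∀ k, ∀ d : σ →₀ ℕ, d.degree < μ k → coeff d (mvTaylor (A k) p) = c k d :=
  ⟨fun h k d hd ↦ congrFun h ⟨k, d, hd⟩, fun h ↦ funext fun x ↦ h x.1 x.2 x.2.2⟩

theorem taylorCorrect_of_card_eq [Finite σ] [Fintype ι] {n : ℕ} {μ : ι → ℕ} {A : ι → σ → K}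
    (hcard : Nat.card {d : σ →₀ ℕ // d.degree < n + 1} =
      ∑ k, Nat.card {d : σ →₀ ℕ // d.degree < μ k})
    (hzero : ∀ p : MvPolynomial σ K, p.totalDegree ≤ n →
      (∀ k, μ k ≤ vanishingOrder (A k) p) → p = 0) :
    TaylorCorrect n μ A := by
  have hfin (k : ℕ) : Finite {d : σ →₀ ℕ // d.degree < k} := Finsupp.finite_of_degree_lt k
  have hdim : Module.finrank K (restrictTotalDegree σ K n) =
      Module.finrank K ((Σ k, {d : σ →₀ ℕ // d.degree < μ k}) → K) := by
    have := fun k ↦ Fintype.ofFinite {d : σ →₀ ℕ // d.degree < μ k}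
    rw [finrank_restrictTotalDegree, hcard, Module.finrank_fintype_fun_eq_card,
      ← Nat.card_eq_fintype_card, Nat.card_sigma]
  have hinj : Function.Injective ((taylorData μ A).domRestrict (restrictTotalDegree σ K n)) := by
    refine (injective_iff_map_eq_zero _).2 fun p hp ↦ Subtype.ext (hzero p ?_ fun k ↦ ?_)
    · exact (mem_restrictTotalDegree σ n p.1).1 p.2
    · exact natCast_le_vanishingOrder_iff.2 (taylorData_eq_iff (c := 0).1 hp k)
  have hsurj := (LinearMap.injective_iff_surjective_of_finrank_eq_finrank hdim).1 hinj
  intro c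
  obtain ⟨p, hp, hp_unique⟩ :=
    Function.Bijective.existsUnique ⟨hinj, hsurj⟩ fun x ↦ c x.1 x.2
  refine ⟨p, ⟨(mem_restrictTotalDegree σ n p.1).1 p.2, taylorData_eq_iff.1 hp⟩, ?_⟩
  rintro q ⟨hqdeg, hq⟩
  exact congrArg Subtype.val
    (hp_unique ⟨q, (mem_restrictTotalDegree σ n q).2 hqdeg⟩ (taylorData_eq_iff.2 hq))

theorem card_degree_lt [Fintype σ] [Nonempty σ] (n : ℕ) :
    Nat.card {d : σ →₀ ℕ // d.degree < n} = n.multichoose (Fintype.card σ) := by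
  classical
  have hset : {d : σ →₀ ℕ | d.degree < n} =
      ((Finset.range n).biUnion fun k ↦ Finset.univ.finsuppAntidiag k : Finset (σ →₀ ℕ)) := by
    ext d
    simp [Finsupp.degree_eq_sum]
  have hdisj : (Finset.range n : Set ℕ).PairwiseDisjoint fun k ↦
      (Finset.univ.finsuppAntidiag k : Finset (σ →₀ ℕ)) := by
    refine fun a _ b _ hab ↦ Finset.disjoint_left.2 fun d hda hdb ↦ hab ?_
    rw [← (Finset.mem_finsuppAntidiag.1 hda).1, (Finset.mem_finsuppAntidiag.1 hdb).1]
  calc Nat.card {d : σ →₀ ℕ // d.degree < n}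
      = ∑ k ∈ Finset.range n, (Fintype.card σ).multichoose k := by
        rw [← Set.coe_ofPred, hset, Nat.card_coe_set_eq, Set.ncard_coe_finset,
          Finset.card_biUnion hdisj]
        simp only [Finset.card_finsuppAntidiag_nat_eq_multichoose, Finset.card_univ]
    _ = n.multichoose (Fintype.card σ) := by
        cases n with
        | zero =>
          rw [Finset.sum_range_zero, Nat.multichoose_eq, zero_add,
            Nat.choose_eq_zero_of_lt (Nat.sub_lt Fintype.card_pos one_pos)]
        | succ n =>
          rw [Nat.sum_range_multichoose, Nat.multichoose_eq, Nat.add_right_comm, Nat.add_sub_cancel]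

theorem two_mul_add_one_choose_two (m : ℕ) :
    (2 * m + 1).choose 2 = 3 * (m + 1).choose 2 + m.choose 2 := by
  have hsucc (n : ℕ) : (n + 1).choose 2 = n + n.choose 2 := by
    rw [Nat.choose_succ_succ', Nat.choose_one_right]
  induction m with
  | zero => rfl
  | succ m ih =>
    simp only [mul_add, mul_one, hsucc] at ih ⊢
    omega

theorem stmt_17_general {m : ℕ} (hm : 1 ≤ m) {A : Fin 4 → Fin 2 → K}
    (hA : ∀ i j k, i ≠ j → i ≠ k → j ≠ k → ¬Collinear K {A i, A j, A k}) :
    TaylorCorrect (2 * m - 1) ![m, m, m, m - 1] A := by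
  refine taylorCorrect_of_card_eq ?_ fun p hdeg hp ↦ ?_
  · have hcard (n : ℕ) : Nat.card {d : Fin 2 →₀ ℕ // d.degree < n} = (n + 1).choose 2 := by
      rw [card_degree_lt, Fintype.card_fin, Nat.multichoose_eq, Nat.add_succ_sub_one]
    have hmult : ∑ k, (![m, m, m, m - 1] k + 1).choose 2 = 3 * (m + 1).choose 2 + m.choose 2 := by
      simp only [Fin.sum_univ_four, Matrix.cons_val, Nat.sub_add_cancel hm]
      ring
    simp only [hcard]
    rw [hmult, ← two_mul_add_one_choose_two, Nat.sub_add_cancel (by omega)]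
  · refine eq_zero_of_le_vanishingOrder hA (m := m) (by omega) (hp 0) (hp 1) (hp 2) ?_
    rw [← Nat.sub_add_cancel hm, Nat.cast_add_one]
    exact add_le_add_left (hp 3) 1

end TaylorInterpolation

section Hermite

theorem eval_Dij (P : Fin 2 → ℝ) (i j : ℕ) (p : MvPolynomial (Fin 2) ℝ) :
    eval P (Dij i j p) = i.factorial * j.factorial *
      coeff (Finsupp.single 0 i + Finsupp.single 1 j) (mvTaylor P p) := by
  have hcomm : mvTaylor P (Dij i j p) = Dij i j (mvTaylor P p) := by
    have h (k : Fin 2) : Function.Semiconj (mvTaylor P) (fun q ↦ pderiv k q) (fun q ↦ pderiv k q) :=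
      fun q ↦ (pderiv_mvTaylor P k q).symm
    simp only [Dij, ((h _).iterate_right _).eq]
  rw [← coeff_zero_mvTaylor, hcomm, Dij, coeff_iterate_pderiv _ _ _ (by simp),
    coeff_iterate_pderiv _ _ _ (by simp), zero_add, mul_assoc]

theorem TaylorCorrect.hermiteCorrect {n s : ℕ} {nk : Fin s → ℕ} {A : Fin s → Fin 2 → ℝ}
    (h : TaylorCorrect n nk A) : HermiteCorrect n s nk A := by
  intro c
  have hiff (p : MvPolynomial (Fin 2) ℝ) :
      (∀ k, ∀ d : Fin 2 →₀ ℕ, d.degree < nk k → coeff d (mvTaylor (A k) p) =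
        c k (d 0) (d 1) / ((d 0).factorial * (d 1).factorial)) ↔
      ∀ k i j, i + j + 1 ≤ nk k → eval (A k) (Dij i j p) = c k i j := by
    have hpair : Function.Surjective fun ij : ℕ × ℕ ↦
        (Finsupp.single 0 ij.1 + Finsupp.single 1 ij.2 : Fin 2 →₀ ℕ) := fun d ↦
      ⟨(d 0, d 1), by ext i; fin_cases i <;> simp⟩
    simp only [hpair.forall, Prod.forall, eval_Dij]
    refine forall_congr' fun k ↦ forall₂_congr fun i j ↦ ?_
    have hi : (Finsupp.single 0 i + Finsupp.single 1 j : Fin 2 →₀ ℕ) 0 = i := by simp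
    have hj : (Finsupp.single 0 i + Finsupp.single 1 j : Fin 2 →₀ ℕ) 1 = j := by simp
    have hfactorial : (i.factorial * j.factorial : ℝ) ≠ 0 := by positivity
    rw [hi, hj, map_add, Finsupp.degree_single, Finsupp.degree_single, Nat.lt_iff_add_one_le,
      eq_div_iff hfactorial, mul_comm (coeff _ _)]
  simpa only [hiff] using h fun k d ↦ c k (d 0) (d 1) / ((d 0).factorial * (d 1).factorial)

end Hermite

theorem stmt_17 (m : ℕ) (hm : 1 ≤ m) (A : Fin 4 → Fin 2 → ℝ)
    (hA : Function.Injective A)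
    (hcol : ∀ i j k : Fin 4, i ≠ j → i ≠ k → j ≠ k →
      ∀ l : MvPolynomial (Fin 2) ℝ, l ≠ 0 → l.totalDegree = 1 →
        ¬(eval (A i) l = 0 ∧ eval (A j) l = 0 ∧ eval (A k) l = 0)) :
    HermiteCorrect (2 * m - 1) 4 ![m, m, m, m - 1] A := by
  exact (stmt_17_general hm fun i j k hij hik hjk ↦
    not_collinear_of_no_common_line (hA.ne hij) (hcol i j k hij hik hjk)).hermiteCorrect
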